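/- Let d ≥ 2, ε > 0, and U ⊂ ℝ^d a compact convex body of dimension d with ℤ^d ∩ int(εU) = {0}. Then there exists a surjective homomorphism φ : ℤ^d → ℤ such that the interval φ(U) has length at most d(d+1)/ε. -/

import Mathlib

open Pointwise

/-- The canonical ℝ-linear extension of a ℤ-linear functional on `ℤ^d` to `ℝ^d`. -/
noncomputable def extR {d : ℕ} (φ : (Fin d → ℤ) →ₗ[ℤ] ℤ) (x : Fin d → ℝ) : ℝ :=
  ∑ i, x i * (φ (Pi.single i 1) : ℝ)

/-- The inclusion of the lattice `ℤ^d` into `ℝ^d`. -/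
def intCast {d : ℕ} (e : Fin d → ℤ) : Fin d → ℝ := fun i => (e i : ℝ)

section
open MeasureTheory Set

namespace FT

def cube (d : ℕ) : Set (Fin d → ℝ) := {x | ∀ i, x i ∈ Ioc (0:ℝ) (0 + 1)}

def ic {d : ℕ} (e : Fin d → ℤ) : Fin d → ℝ := fun i => (e i : ℝ)

lemma measurableSet_cube (d : ℕ) : MeasurableSet (cube d) := by
  have : cube d = Set.pi univ (fun _ => Ioc (0:ℝ) (0+1)) := by
    ext x; simp [cube]
  rw [this]
  exact MeasurableSet.univ_pi (fun _ => measurableSet_Ioc)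

lemma mem_cube_sub {d : ℕ} (t : Fin d → ℝ) (y : Fin d → ℤ) :
    t - ic y ∈ cube d ↔ ∀ i, y i = ⌈t i⌉ - 1 := by
  simp only [cube, mem_ofPred_eq, ic, Pi.sub_apply, mem_Ioc]
  refine forall_congr' fun i => ?_
  constructor
  · rintro ⟨h1, h2⟩
    have : ⌈t i⌉ = y i + 1 := by
      rw [Int.ceil_eq_iff]; push_cast; constructor <;> linarith
    omega
  · intro h
    rw [h]; push_cast
    have h1 := Int.ceil_lt_add_one (t i)
    have h2 := Int.le_ceil (t i)
    constructor <;> linarith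

lemma unfold_integral {d : ℕ} {E : Type*} [NormedAddCommGroup E] [NormedSpace ℝ E]
    (g : (Fin d → ℝ) → E) (hg : Integrable g) (Y : Finset (Fin d → ℤ))
    (hY : ∀ t, g t ≠ 0 → (fun i => ⌈t i⌉ - 1) ∈ Y) :
    ∫ t, g t = ∑ y ∈ Y, ∫ t in cube d, g (t + ic y) := by
  set C : (Fin d → ℤ) → Set (Fin d → ℝ) := fun y => (fun t => t - ic y) ⁻¹' cube d with hC
  have hCm : ∀ y, MeasurableSet (C y) := fun y =>
    (measurable_id.sub_const _) (measurableSet_cube d)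
  have h1 : ∫ t in ⋃ y ∈ Y, C y, g t = ∫ t, g t := by
    apply setIntegral_eq_integral_of_forall_compl_eq_zero
    intro t ht
    by_contra hne
    apply ht
    simp only [mem_iUnion]
    exact ⟨_, hY t hne, (mem_cube_sub t _).2 (fun i => rfl)⟩
  rw [← h1, integral_biUnion_finset Y (fun y _ => hCm y) ?_ (fun y _ => hg.integrableOn)]
  · refine Finset.sum_congr rfl fun y _ => ?_
    have hmp : MeasurePreserving (fun t : Fin d → ℝ => t - ic y) volume volume :=
      measurePreserving_sub_right volume _
    have he : MeasurableEmbedding (fun t : Fin d → ℝ => t - ic y) :=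
      (MeasurableEquiv.subRight (ic y)).measurableEmbedding
    have := hmp.setIntegral_preimage_emb he (fun t => g (t + ic y)) (cube d)
    simpa using this
  · intro y _ y' _ hne
    rw [Function.onFun, Set.disjoint_left]
    intro t ht ht'
    apply hne
    funext i
    rw [(mem_cube_sub t y).1 ht i, (mem_cube_sub t y').1 ht' i]

noncomputable local instance instMS : MeasureSpace UnitAddCircle := ⟨AddCircle.haarAddCircle⟩

lemma mFourier_coe {d : ℕ} (n : Fin d → ℤ) (x : Fin d → ℝ) :
    UnitAddTorus.mFourier (-n) (fun i => (x i : UnitAddCircle)) =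
      Complex.exp (-(2 * Real.pi * Complex.I) * ((∑ i, (n i : ℝ) * x i : ℝ) : ℂ)) := by
  simp only [UnitAddTorus.mFourier, ContinuousMap.coe_mk, fourier_coe_apply]
  rw [← Complex.exp_sum]
  congr 1
  push_cast
  rw [Finset.mul_sum]
  refine Finset.sum_congr rfl fun i _ => ?_
  simp; ring

lemma parseval_cube {d : ℕ} (F : (Fin d → ℝ) → ℂ) (hF : Continuous F) :
    HasSum (fun n : Fin d → ℤ => ‖∫ t in cube d,
        Complex.exp (-(2 * Real.pi * Complex.I) * ((∑ i, (n i : ℝ) * t i : ℝ) : ℂ)) * F t‖ ^ 2)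
      (∫ t in cube d, ‖F t‖ ^ 2) := by
  let Ψ : UnitAddTorus (Fin d) → ℂ := fun z => F (UnitAddTorus.measurableEquivPiIoc 0 z)
  have hΨm : Measurable Ψ := hF.measurable.comp
    (measurable_subtype_coe.comp (UnitAddTorus.measurableEquivPiIoc 0).measurable)
  have hΨ : ∀ x ∈ cube d, Ψ (fun i => (x i : UnitAddCircle)) = F x := by
    intro x hx
    have := UnitAddTorus.coe_symm_measurableEquivPiIoc_apply (b := 0) ⟨x, hx⟩
    change F (UnitAddTorus.measurableEquivPiIoc 0 (fun i => (x i : UnitAddCircle))) = F x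
    rw [← this, MeasurableEquiv.apply_symm_apply]
  have : IsProbabilityMeasure (volume : Measure UnitAddCircle) :=
    inferInstanceAs (IsProbabilityMeasure AddCircle.haarAddCircle)
  obtain ⟨C, hC⟩ : ∃ C, ∀ z, ‖Ψ z‖ ≤ C := by
    have hK : IsCompact (Icc (0 : Fin d → ℝ) 1) := isCompact_Icc
    obtain ⟨C, hC⟩ := hK.exists_bound_of_continuousOn hF.continuousOn
    refine ⟨C, fun z => hC _ ?_⟩
    have := (UnitAddTorus.measurableEquivPiIoc 0 z).2
    constructor
    · intro i; exact (this i).1.le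
    · intro i; simpa using (this i).2
  have hL : MemLp Ψ 2 volume := MemLp.of_bound hΨm.aestronglyMeasurable C (ae_of_all _ hC)
  have key := UnitAddTorus.hasSum_sq_mFourierCoeff (hL.toLp Ψ)
  have hae := hL.coeFn_toLp
  have e1 : ∫ t, ‖(hL.toLp Ψ) t‖ ^ 2 = ∫ t in cube d, ‖F t‖ ^ 2 := by
    rw [integral_congr_ae (g := fun t => ‖Ψ t‖ ^ 2)
      (by filter_upwards [hae] with t ht; rw [ht])]
    rw [UnitAddTorus.integral_preimage (fun t => ‖Ψ t‖ ^ 2) 0]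
    refine setIntegral_congr_fun (measurableSet_cube d) fun x hx => ?_
    simp only [hΨ x hx]
  have e2 : ∀ n, UnitAddTorus.mFourierCoeff (hL.toLp Ψ) n = ∫ t in cube d,
        Complex.exp (-(2 * Real.pi * Complex.I) * ((∑ i, (n i : ℝ) * t i : ℝ) : ℂ)) * F t := by
    intro n
    have : UnitAddTorus.mFourierCoeff (hL.toLp Ψ) n = UnitAddTorus.mFourierCoeff Ψ n := by
      unfold UnitAddTorus.mFourierCoeff
      refine integral_congr_ae ?_
      filter_upwards [hae] with t ht; rw [ht]
    rw [this, UnitAddTorus.mFourierCoeff_eq_integral _ _ 0]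
    refine setIntegral_congr_fun (measurableSet_cube d) fun x hx => ?_
    simp only [hΨ x hx, smul_eq_mul, mFourier_coe]
  simpa only [e1, e2] using key

lemma parseval_unfold {d : ℕ} (f : (Fin d → ℝ) → ℂ) (hf : Continuous f)
    (hc : HasCompactSupport f)
    (hdisj : ∀ t, ∀ y : Fin d → ℤ, y ≠ 0 → f t ≠ 0 → f (t + ic y) = 0) :
    HasSum (fun n : Fin d → ℤ => ‖∫ t,
        Complex.exp (-(2 * Real.pi * Complex.I) * ((∑ i, (n i : ℝ) * t i : ℝ) : ℂ)) * f t‖ ^ 2)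
      (∫ t, ‖f t‖ ^ 2) := by
  obtain ⟨Y, hY⟩ : ∃ Y : Finset (Fin d → ℤ), ∀ t, f t ≠ 0 → (fun i => ⌈t i⌉ - 1) ∈ Y := by
    obtain ⟨M, hM⟩ := hc.isCompact.isBounded.exists_norm_le
    refine ⟨Fintype.piFinset fun _ => Finset.Icc (⌈-M⌉ - 1) (⌈M⌉ - 1), fun t ht => ?_⟩
    rw [Fintype.mem_piFinset]
    intro i
    have h1 := hM t (subset_tsupport f ht)
    have h2 := (norm_le_pi_norm t i).trans h1
    rw [Real.norm_eq_abs, abs_le] at h2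
    rw [Finset.mem_Icc]
    exact ⟨sub_le_sub_right (Int.ceil_mono h2.1) _, sub_le_sub_right (Int.ceil_mono h2.2) _⟩
  let F : (Fin d → ℝ) → ℂ := fun t => ∑ y ∈ Y, f (t + ic y)
  have hF : Continuous F := by fun_prop
  have key := parseval_cube F hF
  have hfi : Integrable f := hf.integrable_of_hasCompactSupport hc
  have e1 : ∫ t in cube d, ‖F t‖ ^ 2 = ∫ t, ‖f t‖ ^ 2 := by
    have hi : Integrable (fun t => ‖f t‖ ^ 2) := by
      refine Continuous.integrable_of_hasCompactSupport (by fun_prop) ?_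
      exact hc.comp_left (g := fun z : ℂ => ‖z‖ ^ 2) (by simp)
    rw [unfold_integral (fun t => ‖f t‖ ^ 2) hi Y
      (fun t ht => hY t (by intro h; simp [h] at ht))]
    rw [← integral_finsetSum]
    · congr 1
      funext t
      simp only [F]
      by_cases h : ∃ y ∈ Y, f (t + ic y) ≠ 0
      · obtain ⟨y, hy, hne⟩ := h
        have h0 : ∀ y' ∈ Y, y' ≠ y → f (t + ic y') = 0 := by
          intro y' _ hne'
          have := hdisj (t + ic y) (y' - y) (sub_ne_zero.2 hne') hne
          convert this using 2
          funext i; simp [ic]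
        rw [Finset.sum_eq_single_of_mem y hy h0, Finset.sum_eq_single_of_mem y hy
          (fun y' hy' hne' => by rw [h0 y' hy' hne']; simp)]
      · push Not at h
        rw [Finset.sum_eq_zero h, Finset.sum_eq_zero (fun y hy => by rw [h y hy]; simp)]
        simp
    · intro y _
      exact (hi.comp_add_right (ic y)).integrableOn
  have e2 : ∀ n : Fin d → ℤ, ∫ t in cube d,
        Complex.exp (-(2 * Real.pi * Complex.I) * ((∑ i, (n i : ℝ) * t i : ℝ) : ℂ)) * F t =
      ∫ t, Complex.exp (-(2 * Real.pi * Complex.I) * ((∑ i, (n i : ℝ) * t i : ℝ) : ℂ)) * f t := by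
    intro n
    have hi : Integrable (fun t : Fin d → ℝ =>
        Complex.exp (-(2 * Real.pi * Complex.I) * ((∑ i, (n i : ℝ) * t i : ℝ) : ℂ)) * f t) := by
      refine Continuous.integrable_of_hasCompactSupport (by fun_prop) ?_
      exact hc.mul_left
    rw [unfold_integral _ hi Y (fun t ht => hY t (by intro h; simp [h] at ht))]
    rw [← integral_finsetSum]
    · congr 1
      funext t
      simp only [F]
      rw [Finset.mul_sum]
      refine Finset.sum_congr rfl fun y _ => ?_
      congr 1
      rw [Complex.exp_eq_exp_iff_exists_int]
      refine ⟨∑ i, n i * y i, ?_⟩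
      simp only [ic, Pi.add_apply, mul_add, Finset.sum_add_distrib]
      push_cast
      ring
    · intro y _
      exact (hi.comp_add_right (ic y)).integrableOn
  simpa only [e1, e2] using key

end FT
end

section
open MeasureTheory Set FourierTransform RealInnerProductSpace

namespace FT

/-- lattice points in Euclidean space -/
def lat {d : ℕ} (e : Fin d → ℤ) : EuclideanSpace ℝ (Fin d) := WithLp.toLp 2 (ic e)

lemma parseval_V {d : ℕ} (T : EuclideanSpace ℝ (Fin d) ≃L[ℝ] EuclideanSpace ℝ (Fin d))
    (S : EuclideanSpace ℝ (Fin d) → EuclideanSpace ℝ (Fin d))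
    (hTS : ∀ t x, ⟪T t, S x⟫ = ⟪t, x⟫) (ρ : ℝ)
    (hρ : ∀ y : Fin d → ℤ, y ≠ 0 → 2 * ρ ≤ ‖T (lat y)‖) (c : EuclideanSpace ℝ (Fin d)) :
    ∃ D : ℝ, 0 < D ∧ ∀ h : EuclideanSpace ℝ (Fin d) → ℂ, Continuous h →
      (∀ s, ρ ≤ ‖s‖ → h s = 0) →
      HasSum (fun n : Fin d → ℤ => ‖𝓕 h (S (lat n - c))‖ ^ 2) (D * ∫ s, ‖h s‖ ^ 2) := by
  set δ : ℝ := |(LinearMap.det (T : EuclideanSpace ℝ (Fin d) →ₗ[ℝ] EuclideanSpace ℝ (Fin d)))⁻¹|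
    with hδ
  have hdet : LinearMap.det (T : EuclideanSpace ℝ (Fin d) →ₗ[ℝ] EuclideanSpace ℝ (Fin d)) ≠ 0 :=
    (LinearEquiv.isUnit_det' T.toLinearEquiv).ne_zero
  have hδ0 : 0 < δ := abs_pos.2 (inv_ne_zero hdet)
  have hcv : ∀ {E : Type} [NormedAddCommGroup E] [NormedSpace ℝ E]
      (g : EuclideanSpace ℝ (Fin d) → E), ∫ t : Fin d → ℝ, g (T (WithLp.toLp 2 t)) =
        δ • ∫ s, g s := by
    intro E _ _ g
    rw [(PiLp.volume_preserving_toLp (Fin d)).integral_comp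
      (MeasurableEquiv.toLp 2 (Fin d → ℝ)).measurableEmbedding (fun s => g (T s))]
    have h1 := T.toHomeomorph.measurableEmbedding.integral_map (μ := volume) g
    have h2 := Measure.map_linearMap_addHaar_eq_smul_addHaar
      (volume : Measure (EuclideanSpace ℝ (Fin d))) hdet
    have h3 : Measure.map T.toHomeomorph (volume : Measure (EuclideanSpace ℝ (Fin d))) =
      ENNReal.ofReal δ • volume := h2
    rw [h3, integral_smul_measure, ENNReal.toReal_ofReal hδ0.le] at h1
    exact h1.symm
  refine ⟨δ⁻¹, inv_pos.2 hδ0, fun h hc hs => ?_⟩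
  let f : (Fin d → ℝ) → ℂ := fun t => h (T (WithLp.toLp 2 t)) *
    Complex.exp ((2 * Real.pi * Complex.I) * ((⟪c, WithLp.toLp 2 t⟫ : ℝ) : ℂ))
  have hto : Continuous (fun t : Fin d → ℝ => (WithLp.toLp 2 t : EuclideanSpace ℝ (Fin d))) :=
    PiLp.continuous_toLp 2 _
  have hfc : Continuous f := by fun_prop
  have hfs : HasCompactSupport f := by
    have h1 : HasCompactSupport h := by
      refine HasCompactSupport.of_support_subset_isCompact (isCompact_closedBall 0 ρ) ?_
      intro s hs'
      rw [mem_closedBall_zero_iff]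
      by_contra hlt
      exact hs' (hs s (not_le.1 hlt).le)
    have h2 : HasCompactSupport (fun t : Fin d → ℝ => h (T (WithLp.toLp 2 t))) :=
      h1.comp_homeomorph ((PiLp.homeomorph 2 (fun _ : Fin d => ℝ)).symm.trans T.toHomeomorph)
    exact h2.mul_right
  have hfd : ∀ t, ∀ y : Fin d → ℤ, y ≠ 0 → f t ≠ 0 → f (t + ic y) = 0 := by
    intro t y hy hft
    have h1 : ‖T (WithLp.toLp 2 t)‖ < ρ := by
      by_contra hlt
      exact hft (by simp only [f]; rw [hs _ (not_lt.1 hlt), zero_mul])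
    have h2 := hρ y hy
    have h3 : T (WithLp.toLp 2 (t + ic y)) = T (WithLp.toLp 2 t) + T (lat y) := by
      rw [← map_add]; rfl
    simp only [f]
    rw [hs, zero_mul]
    rw [h3]
    have h4 : ‖T (lat y)‖ ≤ ‖T (WithLp.toLp 2 t) + T (lat y)‖ + ‖T (WithLp.toLp 2 t)‖ := by
      have := norm_sub_le (T (WithLp.toLp 2 t) + T (lat y)) (T (WithLp.toLp 2 t))
      simpa using this
    linarith
  have key := parseval_unfold f hfc hfs hfd
  have e1 : ∫ t, ‖f t‖ ^ 2 = δ * ∫ s, ‖h s‖ ^ 2 := by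
    rw [← smul_eq_mul, ← hcv (fun s => ‖h s‖ ^ 2)]
    congr 1
    funext t
    simp only [f, norm_mul]
    have : ‖Complex.exp ((2 * Real.pi * Complex.I) * ((⟪c, WithLp.toLp 2 t⟫ : ℝ) : ℂ))‖ = 1 := by
      have := Complex.norm_exp_ofReal_mul_I (2 * Real.pi * ⟪c, WithLp.toLp 2 t⟫)
      rw [← this]; congr 2; push_cast; ring
    rw [this, mul_one]
  have e2 : ∀ n : Fin d → ℤ, ‖∫ t,
      Complex.exp (-(2 * Real.pi * Complex.I) * ((∑ i, (n i : ℝ) * t i : ℝ) : ℂ)) * f t‖ ^ 2 =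
      δ ^ 2 * ‖𝓕 h (S (lat n - c))‖ ^ 2 := by
    intro n
    have : ∫ t, Complex.exp (-(2 * Real.pi * Complex.I) * ((∑ i, (n i : ℝ) * t i : ℝ) : ℂ)) * f t
        = δ • 𝓕 h (S (lat n - c)) := by
      rw [Real.fourier_eq', ← hcv]
      congr 1
      funext t
      simp only [f, smul_eq_mul]
      rw [hTS, inner_sub_right, mul_comm (h _), ← mul_assoc, ← Complex.exp_add]
      congr 2
      have h1 : ⟪(WithLp.toLp 2 t : EuclideanSpace ℝ (Fin d)), lat n⟫ = ∑ i, (n i : ℝ) * t i := by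
        simp [PiLp.inner_apply, lat, ic]
      rw [h1, real_inner_comm]
      push_cast
      ring
    rw [this, norm_smul, mul_pow, Real.norm_eq_abs, abs_of_pos hδ0]
  simp only [e1, e2] at key
  have hm := key.mul_left ((δ ^ 2)⁻¹)
  have e3 : ∀ x : ℝ, (δ ^ 2)⁻¹ * (δ ^ 2 * x) = x := fun x => by field_simp
  have e4 : ∀ x : ℝ, (δ ^ 2)⁻¹ * (δ * x) = δ⁻¹ * x := fun x => by field_simp
  simp only [e3, e4] at hm
  exact hm

end FT
end

section
open MeasureTheory Set FourierTransform RealInnerProductSpace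

namespace FT

lemma hasDerivAt_maxpow (k : ℕ) (x : ℝ) :
    HasDerivAt (fun x : ℝ => (max x 0) ^ (k + 2)) ((k + 2 : ℝ) * (max x 0) ^ (k + 1)) x := by
  rcases lt_trichotomy x 0 with h | h | h
  · rw [max_eq_right h.le]
    have : HasDerivAt (fun _ : ℝ => (0:ℝ)) 0 x := hasDerivAt_const _ _
    simp only [ne_eq, Nat.add_eq_zero_iff, one_ne_zero, and_false, not_false_eq_true, zero_pow,
      mul_zero]
    refine this.congr_of_eventuallyEq ?_
    filter_upwards [gt_mem_nhds h] with y hy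
    rw [max_eq_right hy.le]; simp
  · subst h
    simp only [max_self, ne_eq, Nat.add_eq_zero_iff, one_ne_zero, and_false, not_false_eq_true,
      zero_pow, mul_zero]
    rw [hasDerivAt_iff_isLittleO]
    simp only [max_self, ne_eq, Nat.add_eq_zero_iff, OfNat.ofNat_ne_zero, and_false,
      not_false_eq_true, zero_pow, sub_zero, smul_eq_mul, mul_zero]
    have h1 : (fun x : ℝ => max x 0 ^ (k + 2)) =O[nhds 0] (fun x : ℝ => x ^ (k + 2)) := by
      refine Asymptotics.IsBigO.of_bound 1 (Filter.Eventually.of_forall fun y => ?_)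
      rw [one_mul, norm_pow, norm_pow]
      refine pow_le_pow_left₀ (norm_nonneg _) ?_ _
      rw [Real.norm_eq_abs, Real.norm_eq_abs, abs_of_nonneg (le_max_right _ _)]
      exact max_le (le_abs_self y) (abs_nonneg y)
    refine h1.trans_isLittleO ?_
    have := Asymptotics.isLittleO_pow_pow (𝕜 := ℝ) (m := 1) (n := k + 2) (by omega)
    simpa using this
  · rw [max_eq_left h.le]
    have : HasDerivAt (fun x : ℝ => x ^ (k + 2)) (((k + 2 : ℕ) : ℝ) * x ^ (k + 2 - 1)) x :=
      hasDerivAt_pow _ _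
    push_cast at this
    refine this.congr_of_eventuallyEq ?_
    filter_upwards [lt_mem_nhds h] with y hy
    rw [max_eq_left hy.le]

section
variable {V : Type*} [NormedAddCommGroup V] [InnerProductSpace ℝ V]

/-- positive part of `ρ² - |s|²` -/
def mm (ρ : ℝ) (s : V) : ℝ := max (ρ ^ 2 - ‖s‖ ^ 2) 0

lemma continuous_mm (ρ : ℝ) : Continuous (mm (V := V) ρ) := by
  unfold mm; fun_prop

lemma hasFDerivAt_mm (ρ : ℝ) (k : ℕ) (s : V) :
    HasFDerivAt (fun s : V => mm ρ s ^ (k + 2))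
      ((-(2 * (k + 2 : ℝ)) * mm ρ s ^ (k + 1)) • innerSL ℝ s) s := by
  have h1 : HasFDerivAt (fun s : V => ρ ^ 2 - ‖s‖ ^ 2) (-(2 • innerSL ℝ s)) s :=
    (hasStrictFDerivAt_norm_sq s).hasFDerivAt.const_sub _
  have h2 := (hasDerivAt_maxpow k (ρ ^ 2 - ‖s‖ ^ 2)).comp_hasFDerivAt s h1
  refine h2.congr_fderiv ?_
  ext v
  simp [mm]
  ring

lemma mm_zero (ρ : ℝ) (hρ : 0 ≤ ρ) (s : V) (hs : ρ ≤ ‖s‖) : mm ρ s = 0 := by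
  unfold mm
  apply max_eq_right
  nlinarith

def psi (ρ : ℝ) (n s : V) : ℝ := ⟪n, s⟫ * mm ρ s ^ 2

def gg (ρ : ℝ) (n v s : V) : ℝ := ⟪n, v⟫ * mm ρ s ^ 2 - 4 * ⟪n, s⟫ * ⟪s, v⟫ * mm ρ s

def hh (ρ : ℝ) (n v s : V) : ℝ := ⟪n, v⟫ * (⟪n, s⟫ * mm ρ s ^ 4) - 
  4 * (⟪n, s⟫ * (⟪n, s⟫ * (⟪v, s⟫ * mm ρ s ^ 3)))

def jj (ρ : ℝ) (n v s : V) : ℝ := ⟪n, v⟫ ^ 2 * mm ρ s ^ 4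
  - 16 * ⟪n, s⟫ * ⟪n, v⟫ * ⟪s, v⟫ * mm ρ s ^ 3 - 4 * ⟪n, s⟫ ^ 2 * ⟪v, v⟫ * mm ρ s ^ 3
  + 24 * ⟪n, s⟫ ^ 2 * ⟪s, v⟫ ^ 2 * mm ρ s ^ 2

lemma hasFDerivAt_inner_left (n s : V) : HasFDerivAt (fun s : V => ⟪n, s⟫) (innerSL ℝ n) s :=
  (innerSL ℝ n).hasFDerivAt

lemma psi_deriv (ρ : ℝ) (n s : V) :
    ∃ L : V →L[ℝ] ℝ, HasFDerivAt (psi ρ n) L s ∧ ∀ v, L v = gg ρ n v s := by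
  refine ⟨_, (hasFDerivAt_inner_left n s).mul (hasFDerivAt_mm ρ 0 s), fun v => ?_⟩
  simp [gg]
  ring

lemma hh_deriv (ρ : ℝ) (n v s : V) :
    ∃ L : V →L[ℝ] ℝ, HasFDerivAt (hh ρ n v) L s ∧ L v = jj ρ n v s := by
  refine ⟨_, (((hasFDerivAt_inner_left n s).mul (hasFDerivAt_mm ρ 2 s)).const_mul _).sub
    (((hasFDerivAt_inner_left n s).mul ((hasFDerivAt_inner_left n s).mul
      ((hasFDerivAt_inner_left v s).mul (hasFDerivAt_mm ρ 1 s)))).const_mul 4), ?_⟩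
  simp [jj]
  rw [real_inner_comm v s]
  ring

end

section
variable {d : ℕ}

lemma continuous_psi (ρ : ℝ) (n : (EuclideanSpace ℝ (Fin d))) : Continuous (psi ρ n) := by
  have := continuous_mm (V := EuclideanSpace ℝ (Fin d)) ρ
  unfold psi; fun_prop
lemma continuous_gg (ρ : ℝ) (n v : (EuclideanSpace ℝ (Fin d))) : Continuous (gg ρ n v) := by
  have := continuous_mm (V := EuclideanSpace ℝ (Fin d)) ρ
  unfold gg; fun_prop
lemma continuous_hh (ρ : ℝ) (n v : (EuclideanSpace ℝ (Fin d))) : Continuous (hh ρ n v) := by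
  have := continuous_mm (V := EuclideanSpace ℝ (Fin d)) ρ
  unfold hh; fun_prop
lemma continuous_jj (ρ : ℝ) (n v : (EuclideanSpace ℝ (Fin d))) : Continuous (jj ρ n v) := by
  have := continuous_mm (V := EuclideanSpace ℝ (Fin d)) ρ
  unfold jj; fun_prop

lemma cs_of {E : Type*} [Zero E] (ρ : ℝ) (h : (EuclideanSpace ℝ (Fin d)) → E) (hs : ∀ s, ρ ≤ ‖s‖ → h s = 0) :
    HasCompactSupport h := by
  refine HasCompactSupport.of_support_subset_isCompact (isCompact_closedBall 0 ρ) ?_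
  intro s hs'
  rw [mem_closedBall_zero_iff]
  by_contra hlt
  exact hs' (hs s (not_le.1 hlt).le)

lemma psi_zero (ρ : ℝ) (hρ : 0 ≤ ρ) (n s : (EuclideanSpace ℝ (Fin d))) (hs : ρ ≤ ‖s‖) : psi ρ n s = 0 := by
  simp [psi, mm_zero ρ hρ s hs]
lemma gg_zero (ρ : ℝ) (hρ : 0 ≤ ρ) (n v s : (EuclideanSpace ℝ (Fin d))) (hs : ρ ≤ ‖s‖) : gg ρ n v s = 0 := by
  simp [gg, mm_zero ρ hρ s hs]
lemma hh_zero (ρ : ℝ) (hρ : 0 ≤ ρ) (n v s : (EuclideanSpace ℝ (Fin d))) (hs : ρ ≤ ‖s‖) : hh ρ n v s = 0 := by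
  simp [hh, mm_zero ρ hρ s hs]
lemma jj_zero (ρ : ℝ) (hρ : 0 ≤ ρ) (n v s : (EuclideanSpace ℝ (Fin d))) (hs : ρ ≤ ‖s‖) : jj ρ n v s = 0 := by
  simp [jj, mm_zero ρ hρ s hs]

lemma integral_jj (ρ : ℝ) (hρ : 0 ≤ ρ) (n v : (EuclideanSpace ℝ (Fin d))) : ∫ s, jj ρ n v s = 0 := by
  choose L hL hL' using fun s => hh_deriv ρ n v s
  have hd : ∀ s, fderiv ℝ (hh ρ n v) s v = jj ρ n v s := fun s => by
    rw [(hL s).fderiv, hL']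
  have ij : Integrable (jj ρ n v) := (continuous_jj ρ n v).integrable_of_hasCompactSupport
    (cs_of ρ _ (jj_zero ρ hρ n v))
  have ih : Integrable (hh ρ n v) := (continuous_hh ρ n v).integrable_of_hasCompactSupport
    (cs_of ρ _ (hh_zero ρ hρ n v))
  have := integral_mul_fderiv_eq_neg_fderiv_mul_of_integrable (𝕜 := ℝ) (μ := (volume : Measure (EuclideanSpace ℝ (Fin d))))
    (f := fun _ => (1:ℝ)) (g := hh ρ n v) (v := v) (by simp)
    (by simpa [hd] using ij) (by simpa using ih) (fun _ _ => by fun_prop)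
    (fun s _ => (hL s).differentiableAt)
  simpa [hd] using this

lemma sum_inner_mul (x y : (EuclideanSpace ℝ (Fin d))) : ∑ j, ⟪x, EuclideanSpace.single j (1:ℝ)⟫ *
    ⟪y, EuclideanSpace.single j (1:ℝ)⟫ = ⟪x, y⟫ := by
  simp [PiLp.inner_apply, mul_comm]

lemma sum_ineq (ρ : ℝ) (hρ : 0 < ρ) (n s : (EuclideanSpace ℝ (Fin d))) (hn : ‖n‖ = 1) :
    ∑ j, (gg ρ n (EuclideanSpace.single j 1) s) ^ 2 ≤
      ∑ j, jj ρ n (EuclideanSpace.single j 1) s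
        + ((d + 4 : ℝ) ^ 2 / (2 * ρ ^ 2)) * psi ρ n s ^ 2 := by
  have h1 := sum_inner_mul n n
  have h2 := sum_inner_mul n s
  have h3 := sum_inner_mul s s
  rw [real_inner_self_eq_norm_sq] at h1 h3
  rw [hn] at h1
  set m := mm ρ s with hm
  set a := ⟪n, s⟫ with ha
  have e1 : ∑ j, (gg ρ n (EuclideanSpace.single j 1) s) ^ 2 =
      m ^ 4 - 8 * a ^ 2 * m ^ 3 + 16 * a ^ 2 * ‖s‖ ^ 2 * m ^ 2 := by
    have : ∀ j, (gg ρ n (EuclideanSpace.single j 1) s) ^ 2 =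
      m ^ 4 * (⟪n, EuclideanSpace.single j (1:ℝ)⟫ * ⟪n, EuclideanSpace.single j (1:ℝ)⟫)
      + (-8 * a * m ^ 3) * (⟪n, EuclideanSpace.single j (1:ℝ)⟫ * ⟪s, EuclideanSpace.single j (1:ℝ)⟫)
      + (16 * a ^ 2 * m ^ 2) *
        (⟪s, EuclideanSpace.single j (1:ℝ)⟫ * ⟪s, EuclideanSpace.single j (1:ℝ)⟫) := by
      intro j; rw [gg, ← hm, ← ha]; ring
    simp only [this, Finset.sum_add_distrib, ← Finset.mul_sum]
    rw [h1, h2, h3]; ring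
  have e2 : ∑ j, jj ρ n (EuclideanSpace.single j 1) s =
      m ^ 4 - 16 * a ^ 2 * m ^ 3 - 4 * d * a ^ 2 * m ^ 3 + 24 * a ^ 2 * ‖s‖ ^ 2 * m ^ 2 := by
    have : ∀ j, jj ρ n (EuclideanSpace.single j 1) s =
      m ^ 4 * (⟪n, EuclideanSpace.single j (1:ℝ)⟫ * ⟪n, EuclideanSpace.single j (1:ℝ)⟫)
      + (-16 * a * m ^ 3) * (⟪n, EuclideanSpace.single j (1:ℝ)⟫ * ⟪s, EuclideanSpace.single j (1:ℝ)⟫)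
      + (24 * a ^ 2 * m ^ 2) *
        (⟪s, EuclideanSpace.single j (1:ℝ)⟫ * ⟪s, EuclideanSpace.single j (1:ℝ)⟫)
      + (- 4 * a ^ 2 * m ^ 3) := by
      intro j
      have : ⟪(EuclideanSpace.single j (1:ℝ) : (EuclideanSpace ℝ (Fin d))), EuclideanSpace.single j (1:ℝ)⟫ = 1 := by
        rw [real_inner_self_eq_norm_sq]; simp
      rw [jj, ← hm, ← ha, this]; ring
    simp only [this, Finset.sum_add_distrib, ← Finset.mul_sum]
    rw [h1, h2, h3]; simp; ring
  rw [e1, e2, psi, ← hm, ← ha]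
  have hm0 : 0 ≤ m := le_max_right _ _
  rcases hm0.eq_or_lt with h0 | h0
  · rw [← h0]; simp
  · have hs : ‖s‖ ^ 2 = ρ ^ 2 - m := by
      have : m = ρ ^ 2 - ‖s‖ ^ 2 := by
        rw [hm, mm] at h0 ⊢
        rcases max_choice (ρ ^ 2 - ‖s‖ ^ 2) 0 with h | h
        · exact h
        · rw [h] at h0; exact absurd h0 (lt_irrefl _)
      linarith
    rw [hs]
    have key : 0 ≤ (d + 4 : ℝ) ^ 2 / (2 * ρ ^ 2) * m ^ 2 - (4 * d + 16) * m + 8 * ρ ^ 2 := by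
      have : (d + 4 : ℝ) ^ 2 / (2 * ρ ^ 2) * m ^ 2 - (4 * d + 16) * m + 8 * ρ ^ 2 =
        ((d + 4) * m - 4 * ρ ^ 2) ^ 2 / (2 * ρ ^ 2) := by field_simp; ring
      rw [this]; positivity
    have := mul_nonneg (mul_nonneg (sq_nonneg a) (sq_nonneg m)) key
    nlinarith [this]

lemma int_ineq (ρ : ℝ) (hρ : 0 < ρ) (n : (EuclideanSpace ℝ (Fin d))) (hn : ‖n‖ = 1) :
    ∑ j, ∫ s, (gg ρ n (EuclideanSpace.single j 1) s) ^ 2 ≤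
      ((d + 4 : ℝ) ^ 2 / (2 * ρ ^ 2)) * ∫ s, psi ρ n s ^ 2 := by
  have ij : ∀ v, Integrable (jj ρ n v) := fun v =>
    (continuous_jj ρ n v).integrable_of_hasCompactSupport
    (cs_of ρ _ (jj_zero ρ hρ.le n v))
  have ig : ∀ v, Integrable (fun s => gg ρ n v s ^ 2) := fun v =>
    ((continuous_gg ρ n v).pow 2).integrable_of_hasCompactSupport
    (cs_of ρ _ (fun s hs => by simp [gg_zero ρ hρ.le n v s hs]))
  have ip : Integrable (fun s => psi ρ n s ^ 2) :=
    ((continuous_psi ρ n).pow 2).integrable_of_hasCompactSupport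
    (cs_of ρ _ (fun s hs => by simp [psi_zero ρ hρ.le n s hs]))
  rw [← integral_finsetSum _ (fun j _ => ig _)]
  calc _ ≤ ∫ s, (∑ j, jj ρ n (EuclideanSpace.single j 1) s
        + ((d + 4 : ℝ) ^ 2 / (2 * ρ ^ 2)) * psi ρ n s ^ 2) := by
        refine integral_mono (integrable_finsetSum _ fun j _ => ig _)
          ((integrable_finsetSum _ fun j _ => ij _).add (ip.const_mul _)) ?_
        intro s; exact sum_ineq ρ hρ n s hn
    _ = _ := by
        rw [integral_add (integrable_finsetSum _ fun j _ => ij _) (ip.const_mul _),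
          integral_finsetSum _ (fun j _ => ij _), integral_const_mul]
        simp [integral_jj ρ hρ.le]

lemma fourier_gg (ρ : ℝ) (hρ : 0 ≤ ρ) (n v w : (EuclideanSpace ℝ (Fin d))) :
    𝓕 (fun s => (gg ρ n v s : ℂ)) w =
      (2 * Real.pi * Complex.I) * (⟪w, v⟫ : ℝ) * 𝓕 (fun s => (psi ρ n s : ℂ)) w := by
  choose L hL hL' using fun s => psi_deriv ρ n s
  have hD : ∀ s, HasFDerivAt (fun s => (psi ρ n s : ℂ)) (Complex.ofRealCLM.comp (L s)) s :=
    fun s => Complex.ofRealCLM.hasFDerivAt.comp s (hL s)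
  have hfd : fderiv ℝ (fun s => (psi ρ n s : ℂ)) = fun s => Complex.ofRealCLM.comp (L s) :=
    funext fun s => (hD s).fderiv
  have ip : Integrable (fun s => (psi ρ n s : ℂ)) :=
    (Complex.continuous_ofReal.comp (continuous_psi ρ n)).integrable_of_hasCompactSupport
    (cs_of ρ _ (fun s hs => by simp [psi_zero ρ hρ n s hs]))
  have hLc : Continuous L := by
    rw [continuous_clm_apply]
    intro v
    simp only [hL']
    exact continuous_gg ρ n v
  have iD : Integrable (fderiv ℝ (fun s => (psi ρ n s : ℂ))) := by
    rw [hfd]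
    refine Continuous.integrable_of_hasCompactSupport (by fun_prop) (cs_of ρ _ fun s hs => ?_)
    ext v
    simp [hL', gg_zero ρ hρ n v s hs]
  have key := Real.fourier_fderiv ip (fun s => (hD s).differentiableAt) iD
  have h2 := congrArg (fun F => F w v) key
  rw [Real.fourier_continuousLinearMap_apply iD, hfd] at h2
  simp only [ContinuousLinearMap.comp_apply, Complex.ofRealCLM_apply, hL',
    VectorFourier.fourierSMulRight_apply] at h2
  rw [h2]
  have e : ((-innerSL ℝ) w) v = - ⟪w, v⟫ := rfl
  rw [e]
  simp
  ring

lemma fourier_psi_zero (ρ : ℝ) (n w : (EuclideanSpace ℝ (Fin d))) (hw : ⟪n, w⟫ = 0) :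
    𝓕 (fun s => (psi ρ n s : ℂ)) w = 0 := by
  let R : (EuclideanSpace ℝ (Fin d)) ≃ₗᵢ[ℝ] (EuclideanSpace ℝ (Fin d)) := (ℝ ∙ n)ᗮ.reflection
  have hR : ∀ s, ⟪n, R s⟫ = - ⟪n, s⟫ := by
    intro s
    rw [← R.inner_map_map n (R s)]
    have h1 : R n = -n := Submodule.reflection_orthogonalComplement_singleton_eq_neg n
    have h2 : R (R s) = s := Submodule.reflection_reflection _ s
    rw [h1, h2, inner_neg_left]
  have hRw : R w = w := by
    apply Submodule.reflection_mem_subspace_eq_self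
    rw [Submodule.mem_orthogonal_singleton_iff_inner_right]
    exact hw
  have h1 := Real.fourier_comp_linearIsometry R (fun s => (psi ρ n s : ℂ)) w
  rw [hRw] at h1
  have h2 : ((fun s => (psi ρ n s : ℂ)) ∘ R) = fun s => - (psi ρ n s : ℂ) := by
    funext s
    simp [psi, mm, hR, LinearIsometryEquiv.norm_map]
  rw [h2] at h1
  have h3 : 𝓕 (fun s => -(psi ρ n s : ℂ)) w = - 𝓕 (fun s => (psi ρ n s : ℂ)) w := by
    simp only [Real.fourier_eq, smul_neg, integral_neg]
  rw [h3] at h1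
  exact self_eq_neg.1 h1.symm

lemma exists_unit_orth (hd : 2 ≤ d) (w : (EuclideanSpace ℝ (Fin d))) : ∃ n : (EuclideanSpace ℝ (Fin d)), ‖n‖ = 1 ∧ ⟪n, w⟫ = 0 := by
  have h1 := Submodule.finrank_add_finrank_orthogonal (ℝ ∙ w)
  have h2 : Module.finrank ℝ (ℝ ∙ w) ≤ 1 := by
    simpa using finrank_span_le_card (R := ℝ) ({w} : Set (EuclideanSpace ℝ (Fin d)))
  have h3 : Module.finrank ℝ (EuclideanSpace ℝ (Fin d)) = d := by simp
  have h4 : 0 < Module.finrank ℝ (ℝ ∙ w)ᗮ := by omega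
  rw [Module.finrank_pos_iff] at h4
  obtain ⟨x, hx⟩ := exists_ne (0 : (ℝ ∙ w)ᗮ)
  have hx0 : (x : (EuclideanSpace ℝ (Fin d))) ≠ 0 := by simpa using hx
  refine ⟨(‖(x:(EuclideanSpace ℝ (Fin d)))‖⁻¹) • (x : (EuclideanSpace ℝ (Fin d))), ?_, ?_⟩
  · rw [norm_smul, norm_inv, norm_norm, inv_mul_cancel₀ (norm_ne_zero_iff.2 hx0)]
  · rw [inner_smul_left, Submodule.mem_orthogonal_singleton_iff_inner_left.1 x.2, mul_zero]

theorem spectral (hd : 2 ≤ d) (T : (EuclideanSpace ℝ (Fin d)) ≃L[ℝ] (EuclideanSpace ℝ (Fin d))) (S : (EuclideanSpace ℝ (Fin d)) → (EuclideanSpace ℝ (Fin d)))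
    (hTS : ∀ t x, ⟪T t, S x⟫ = ⟪t, x⟫)
    (hρ : ∀ y : Fin d → ℤ, y ≠ 0 → (d + 1 : ℝ) / 2 ≤ ‖T (lat y)‖) (c : (EuclideanSpace ℝ (Fin d)))
    (hx : ∀ x : Fin d → ℤ, x ≠ 0 → 1 ≤ ‖S (lat x - c)‖) : False := by
  set ρ : ℝ := (d + 1) / 4 with hρd
  have hρ0 : 0 < ρ := by positivity
  obtain ⟨D, hD, hP⟩ := parseval_V T S hTS ρ (fun y hy => by
    rw [hρd]; linarith [hρ y hy]) c
  obtain ⟨n, hn, hnw⟩ := exists_unit_orth hd (S (lat 0 - c))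
  have P1 := hP (fun s => (psi ρ n s : ℂ)) (Complex.continuous_ofReal.comp (continuous_psi ρ n))
    (fun s hs => by simp [psi_zero ρ hρ0.le n s hs])
  have P2 := fun v => hP (fun s => (gg ρ n v s : ℂ))
    (Complex.continuous_ofReal.comp (continuous_gg ρ n v))
    (fun s hs => by simp [gg_zero ρ hρ0.le n v s hs])
  simp only [Complex.norm_real, Real.norm_eq_abs, sq_abs] at P1 P2
  have P3 := hasSum_sum (s := Finset.univ) (fun (j : Fin d) _ => P2 (EuclideanSpace.single j 1))
  have P4 := P1.mul_left (4 * Real.pi ^ 2)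
  have hle := hasSum_le (fun x => ?_) P4 P3
  · rw [← Finset.mul_sum] at hle
    have h1 := int_ineq ρ hρ0 n hn
    have hpos : 0 < ∫ s, psi ρ n s ^ 2 := by
      refine Continuous.integral_pos_of_hasCompactSupport_nonneg_nonzero
        (x := (ρ / 2) • n) ((continuous_psi ρ n).pow 2) 
        (cs_of ρ _ (fun s hs => by simp [psi_zero ρ hρ0.le n s hs])) (fun s => sq_nonneg _) ?_
      have h2 : mm ρ ((ρ / 2) • n) = ρ ^ 2 - (ρ / 2) ^ 2 := by
        rw [mm, norm_smul, hn, mul_one, Real.norm_eq_abs, sq_abs]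
        apply max_eq_left; nlinarith
      have h3 : ⟪n, (ρ / 2) • n⟫ = ρ / 2 := by
        rw [inner_smul_right, real_inner_self_eq_norm_sq, hn]; ring
      rw [psi, h2, h3]
      have : 0 < ρ ^ 2 - (ρ / 2) ^ 2 := by nlinarith
      positivity
    have h2 : (d + 4 : ℝ) ^ 2 / (2 * ρ ^ 2) < 4 * Real.pi ^ 2 := by
      have hpi : 9 < Real.pi ^ 2 := by nlinarith [Real.pi_gt_three]
      have hd' : (2 : ℝ) ≤ d := by exact_mod_cast hd
      have : (d + 4 : ℝ) ^ 2 / (2 * ρ ^ 2) < 36 := by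
        rw [div_lt_iff₀ (by positivity), hρd]
        nlinarith
      linarith
    have h3 := mul_lt_mul_of_pos_right h2 hpos
    have h4 := mul_lt_mul_of_pos_left (h1.trans_lt h3) hD
    linarith
  · have e : ∑ j, ‖𝓕 (fun s => (gg ρ n (EuclideanSpace.single j 1) s : ℂ)) (S (lat x - c))‖ ^ 2
        = 4 * Real.pi ^ 2 * ‖S (lat x - c)‖ ^ 2 *
          ‖𝓕 (fun s => (psi ρ n s : ℂ)) (S (lat x - c))‖ ^ 2 := by
      have e1 : ∀ j, ‖𝓕 (fun s => (gg ρ n (EuclideanSpace.single j 1) s : ℂ)) (S (lat x - c))‖ ^ 2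
        = (4 * Real.pi ^ 2 * ‖𝓕 (fun s => (psi ρ n s : ℂ)) (S (lat x - c))‖ ^ 2) * 
          (⟪S (lat x - c), EuclideanSpace.single j (1:ℝ)⟫ *
            ⟪S (lat x - c), EuclideanSpace.single j (1:ℝ)⟫) := by
        intro j
        rw [fourier_gg ρ hρ0.le]
        simp only [norm_mul, Complex.norm_real, Complex.norm_I, Complex.norm_ofNat, mul_pow,
          Real.norm_eq_abs, sq_abs]
        ring
      simp only [e1, ← Finset.mul_sum, sum_inner_mul, real_inner_self_eq_norm_sq]
      ring
    rw [e]
    by_cases h0 : x = 0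
    · subst h0
      rw [fourier_psi_zero ρ n _ hnw]; simp
    · have h1 := hx x h0
      have h2 : 1 ≤ ‖S (lat x - c)‖ ^ 2 := by nlinarith
      have h3 : 0 ≤ 4 * Real.pi ^ 2 * ‖𝓕 (fun s => (psi ρ n s : ℂ)) (S (lat x - c))‖ ^ 2 := by
        positivity
      nlinarith
end
end FT
end

section
open MeasureTheory Set FourierTransform RealInnerProductSpace

namespace FT
section
variable {V : Type*} [NormedAddCommGroup V] [InnerProductSpace ℝ V] [FiniteDimensional ℝ V]

lemma support_ineq (R δ N s : ℝ) (hR : 1 < R) (hδ : 0 < δ) (hδ1 : δ < 1)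
    (ht : δ * (R - 1) / 2 ≤ 1) (hN : 0 ≤ N) (hs : |s| ≤ N) (m : ℝ)
    (hm : m ^ 2 = (1 - δ) * N ^ 2 + ((1 + δ * (R - 1) / 2) ^ 2 - (1 - δ)) * s ^ 2) :
    δ * (R - 1) / 2 * s + m ≤ max N (R * s) := by
  obtain ⟨h1, h2⟩ := abs_le.1 hs
  have ht0 : 0 < δ * (R - 1) / 2 := by
    have := mul_pos hδ (sub_pos.2 hR); linarith
  rcases le_total (R * s) N with h | h
  · rw [max_eq_left h]
    have h3 : 0 ≤ N - δ * (R - 1) / 2 * s := by nlinarith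
    have h4 : m ^ 2 ≤ (N - δ * (R - 1) / 2 * s) ^ 2 := by
      rw [hm]
      have : 0 ≤ δ * ((N - R * s) * (N + s)) :=
        mul_nonneg hδ.le (mul_nonneg (by linarith) (by linarith))
      nlinarith
    have := abs_le_of_sq_le_sq h4 h3
    linarith [le_abs_self m]
  · rw [max_eq_right h]
    have hs0 : 0 ≤ s := by
      by_contra hc
      push Not at hc
      nlinarith
    have h3 : 0 ≤ R * s - δ * (R - 1) / 2 * s := by nlinarith
    have h4 : m ^ 2 ≤ (R * s - δ * (R - 1) / 2 * s) ^ 2 := by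
      rw [hm]
      have h5 : N ^ 2 ≤ (R * s) ^ 2 := pow_le_pow_left₀ hN h 2
      have h6 : (1 - δ) * N ^ 2 ≤ (1 - δ) * (R * s) ^ 2 :=
        mul_le_mul_of_nonneg_left h5 (by linarith)
      refine (add_le_add_left h6 _).trans (le_of_eq ?_)
      ring
    have := abs_le_of_sq_le_sq h4 h3
    linarith [le_abs_self m]

/-- the stretching map -/
noncomputable def stretch (a b : ℝ) (e : V) : V →L[ℝ] V :=
  b • ContinuousLinearMap.id ℝ V + (a - b) • (innerSL ℝ e).smulRight e

lemma stretch_apply (a b : ℝ) (e u : V) :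
    stretch a b e u = b • u + ((a - b) * ⟪e, u⟫) • e := by
  simp [stretch, smul_smul]

lemma stretch_det (a b : ℝ) (hb : b ≠ 0) (e : V) (he : ‖e‖ = 1) :
    LinearMap.det (stretch a b e : V →ₗ[ℝ] V) = b ^ (Module.finrank ℝ V) * (a / b) := by
  have : (stretch a b e : V →ₗ[ℝ] V) =
      b • LinearMap.transvection (((a - b) / b) • (innerSL ℝ e : V →ₗ[ℝ] ℝ)) e := by
    ext u
    simp only [ContinuousLinearMap.coe_coe, stretch_apply, LinearMap.smul_apply,
      LinearMap.transvection.apply, smul_add, smul_smul]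
    congr 2
    simp
    field_simp
  rw [this, LinearMap.det_smul, LinearMap.transvection.det]
  congr 1
  simp [he]
  field_simp
  ring

lemma stretch_norm (a b : ℝ) (e n : V) (he : ‖e‖ = 1) :
    ‖stretch a b e n‖ ^ 2 = b ^ 2 * ‖n‖ ^ 2 + (a ^ 2 - b ^ 2) * ⟪e, n⟫ ^ 2 := by
  rw [stretch_apply, norm_add_sq_real, norm_smul, norm_smul, inner_smul_left, inner_smul_right, he,
    real_inner_comm e n]
  simp only [Real.norm_eq_abs, mul_pow, sq_abs, RCLike.conj_to_real]
  ring

lemma stretch_symm (a b : ℝ) (e n u : V) :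
    ⟪n, stretch a b e u⟫ = ⟪stretch a b e n, u⟫ := by
  rw [stretch_apply, stretch_apply, inner_add_left, inner_add_right, inner_smul_left,
    inner_smul_right, inner_smul_left, inner_smul_right, real_inner_comm e n]
  simp only [RCLike.conj_to_real]
  ring

lemma improve (d : ℕ) (hd : 1 ≤ d) (hfin : Module.finrank ℝ V = d) (K : Set V) (hKc : IsClosed K)
    (hK : Convex ℝ K) (hB : ∀ u : V, ‖u‖ ≤ 1 → u ∈ K) (q : V) (hq : q ∈ K) (hqd : d < ‖q‖) :
    ∃ (M : V →L[ℝ] V) (τ : V), 1 < |LinearMap.det (M : V →ₗ[ℝ] V)| ∧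
      ∀ u : V, ‖u‖ ≤ 1 → τ + M u ∈ K := by
  have hd' : (1:ℝ) ≤ d := by exact_mod_cast hd
  set R := ‖q‖ with hRdef
  have hR : 1 < R := by linarith
  set δ : ℝ := (R - d) / (2 * d * R ^ 2) with hδdef
  have hδm : δ * (2 * d * R ^ 2) = R - d := by
    rw [hδdef]; field_simp
  have hδ : 0 < δ := by
    rw [hδdef]; apply div_pos (by linarith); positivity
  have hR2 : R ≤ R ^ 2 := by nlinarith
  have hdR : R ^ 2 ≤ d * R ^ 2 := by nlinarith
  have hδR : δ * R ^ 2 * 2 ≤ R := by nlinarith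
  have hδ1' : δ * R * 2 ≤ 1 := by
    by_contra hc
    push Not at hc
    nlinarith
  have hδ1 : δ < 1 := by nlinarith
  have ht : δ * (R - 1) / 2 ≤ 1 := by nlinarith
  have hδd : δ * ((R - 1) * (d - 1)) < R - d := by
    rw [← hδm]
    apply mul_lt_mul_of_pos_left _ hδ
    nlinarith
  set t := δ * (R - 1) / 2 with htdef
  have ht0 : 0 < t := by
    have := mul_pos hδ (sub_pos.2 hR); linarith
  set e : V := R⁻¹ • q with hedef
  have he : ‖e‖ = 1 := by
    rw [hedef, norm_smul, norm_inv, Real.norm_eq_abs, abs_of_pos (by linarith), ← hRdef]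
    field_simp
  have hqe : q = R • e := by
    rw [hedef, smul_smul, mul_inv_cancel₀ (by linarith), one_smul]
  set b := Real.sqrt (1 - δ) with hbdef
  have hb2 : b ^ 2 = 1 - δ := Real.sq_sqrt (by linarith)
  have hb : 0 < b := Real.sqrt_pos.2 (by linarith)
  refine ⟨stretch (1 + t) b e, t • e, ?_, ?_⟩
  · rw [stretch_det _ _ hb.ne' _ he, hfin]
    have hpos : 0 < b ^ d * ((1 + t) / b) := by positivity
    rw [abs_of_pos hpos]
    by_contra hc
    push Not at hc
    have h1 : (b ^ d * ((1 + t) / b)) ^ 2 ≤ 1 := pow_le_one₀ hpos.le hc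
    obtain ⟨k, rfl⟩ : ∃ k, d = k + 1 := ⟨d - 1, by omega⟩
    have h2 : (b ^ (k + 1) * ((1 + t) / b)) ^ 2 = (1 - δ) ^ k * (1 + t) ^ 2 := by
      rw [← hb2]; field_simp; ring
    rw [h2] at h1
    have h3 : 1 + (k : ℝ) * (-δ) ≤ (1 + (-δ)) ^ k := one_add_mul_le_pow (by linarith) k
    push_cast at hδd hd'
    have h5 : (1 + (k : ℝ) * (-δ)) * (1 + t) ^ 2 ≤ (1 - δ) ^ k * (1 + t) ^ 2 := by
      apply mul_le_mul_of_nonneg_right _ (by positivity)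
      simpa [sub_eq_add_neg] using h3
    have h6 : 0 < 1 + (k : ℝ) * (-δ) := by
      have : δ * k < 1 := by
        push_cast at hδm
        nlinarith
      linarith
    have h7 : (1 + (k : ℝ) * (-δ)) * (1 + δ * (R - 1)) ≤ (1 + (k : ℝ) * (-δ)) * (1 + t) ^ 2 := by
      apply mul_le_mul_of_nonneg_left _ h6.le
      nlinarith
    have h8 : 1 < (1 + (k : ℝ) * (-δ)) * (1 + δ * (R - 1)) := by
      have : 0 < δ * ((R - (k + 1)) - δ * ((R - 1) * (k + 1 - 1))) :=
        mul_pos hδ (by linarith)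
      nlinarith
    linarith
  · intro u hu
    by_contra hp
    obtain ⟨f, w, hf1, hf2⟩ := geometric_hahn_banach_closed_point hK hKc hp
    obtain ⟨n, rfl⟩ := (InnerProductSpace.toDual ℝ V).surjective f
    simp only [InnerProductSpace.toDual_apply_apply] at hf1 hf2
    have h1 : ‖n‖ ≤ w := by
      by_cases hn : n = 0
      · subst hn
        have := hf1 0 (hB 0 (by simp))
        simp at this ⊢
        exact this.le
      · have h0 : 0 < ‖n‖ := norm_pos_iff.2 hn
        have := hf1 (‖n‖⁻¹ • n) (hB _ (by rw [norm_smul]; simp [h0.ne']))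
        rw [inner_smul_right, real_inner_self_eq_norm_sq] at this
        have h : ‖n‖⁻¹ * ‖n‖ ^ 2 = ‖n‖ := by field_simp
        linarith
    have h2 : R * ⟪e, n⟫ ≤ w := by
      have := hf1 q hq
      rw [hqe, inner_smul_right, real_inner_comm] at this
      exact this.le
    have h3 := support_ineq R δ ‖n‖ ⟪e, n⟫ hR hδ hδ1 ht (norm_nonneg _)
      (by simpa [he] using abs_real_inner_le_norm e n) ‖stretch (1 + t) b e n‖
      (by rw [stretch_norm _ _ _ _ he, hb2])
    have h4 : ⟪stretch (1 + t) b e n, u⟫ ≤ ‖stretch (1 + t) b e n‖ := by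
      refine (real_inner_le_norm _ _).trans ?_
      exact mul_le_of_le_one_right (norm_nonneg _) hu
    rw [inner_add_right, inner_smul_right, stretch_symm, real_inner_comm] at hf2
    have h5 := max_le h1 h2
    rw [← htdef] at h3
    linarith

theorem john (d : ℕ) (hd : 1 ≤ d) (hfin : Module.finrank ℝ V = d) (K : Set V) (hKc : IsCompact K)
    (hK : Convex ℝ K) (hi : (interior K).Nonempty) :
    ∃ (A : V ≃L[ℝ] V) (c : V), (∀ u : V, ‖u‖ ≤ 1 → c + A u ∈ K) ∧
      ∀ x ∈ K, ‖A.symm (x - c)‖ ≤ d := by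
  let X : Set ((V →L[ℝ] V) × V) := {P | ∀ u : V, ‖u‖ ≤ 1 → P.2 + P.1 u ∈ K}
  have : ProperSpace ((V →L[ℝ] V) × V) := FiniteDimensional.proper ℝ _
  have hXc : IsClosed X := by
    have : X = ⋂ (u : V) (_ : ‖u‖ ≤ 1), (fun P : (V →L[ℝ] V) × V => P.2 + P.1 u) ⁻¹' K := by
      ext P; simp [X]
    rw [this]
    refine isClosed_iInter fun u => isClosed_iInter fun _ => hKc.isClosed.preimage (by fun_prop)
  obtain ⟨r, hr⟩ := hKc.isBounded.exists_norm_le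
  have hXb : Bornology.IsBounded X := by
    refine (Metric.isBounded_closedBall (x := (0 : (V →L[ℝ] V) × V)) (r := 2 * r)).subset ?_
    intro P hP
    have h0 : ‖P.2‖ ≤ r := by simpa using hr _ (hP 0 (by simp))
    have hr0 : 0 ≤ r := (norm_nonneg _).trans h0
    rw [mem_closedBall_zero_iff, Prod.norm_def]
    refine max_le ?_ (by linarith)
    refine ContinuousLinearMap.opNorm_le_of_unit_norm (by linarith) fun u hu => ?_
    have h1 := hr _ (hP u hu.le)
    have : P.1 u = (P.2 + P.1 u) - P.2 := by abel
    rw [this]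
    exact (norm_sub_le _ _).trans (by linarith)
  have hXcomp : IsCompact X := Metric.isCompact_of_isClosed_isBounded hXc hXb
  obtain ⟨x0, hx0⟩ := hi
  obtain ⟨s, hs, hsK⟩ := Metric.isOpen_iff.1 isOpen_interior x0 hx0
  have hP0 : ((s / 2) • ContinuousLinearMap.id ℝ V, x0) ∈ X := by
    intro u hu
    apply interior_subset (hsK _)
    simp only [Metric.mem_ball, dist_self_add_left]
    simp [norm_smul, abs_of_pos hs]
    nlinarith
  have hcont : Continuous fun P : (V →L[ℝ] V) × V => |P.1.det| :=
    (ContinuousLinearMap.continuous_det.comp continuous_fst).abs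
  obtain ⟨⟨A, c⟩, hA, hmax⟩ := hXcomp.exists_isMaxOn ⟨_, hP0⟩ hcont.continuousOn
  have hpos : 0 < |A.det| := by
    have h1 := hmax hP0
    simp only [Set.mem_ofPred_eq] at h1
    refine lt_of_lt_of_le ?_ h1
    rw [abs_pos]
    have : LinearMap.det ((s / 2) • (LinearMap.id : V →ₗ[ℝ] V)) ≠ 0 := by
      rw [LinearMap.det_smul]; simp [hs.ne']
    exact this
  let B : V ≃L[ℝ] V := ContinuousLinearMap.toContinuousLinearEquivOfDetNeZero A (abs_pos.1 hpos)
  have hB : ∀ u, B u = A u := fun u => rfl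
  refine ⟨B, c, fun u hu => by rw [hB]; exact hA u hu, fun x hx => ?_⟩
  by_contra hlt
  push Not at hlt
  let K' : Set V := (fun u => c + B u) ⁻¹' K
  obtain ⟨M, τ, hM, hin⟩ := improve d hd hfin K' (hKc.isClosed.preimage (by fun_prop))
    (by
      intro u hu v hv a b ha hb hab
      have : c + B (a • u + b • v) = a • (c + B u) + b • (c + B v) := by
        rw [map_add, map_smul, map_smul, smul_add, smul_add]
        have : c = a • c + b • c := by rw [← add_smul, hab, one_smul]
        nth_rw 1 [this]
        abel
      show c + B (a • u + b • v) ∈ K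
      rw [this]
      exact hK hu hv ha hb hab)
    (fun u hu => by show c + B u ∈ K; rw [hB]; exact hA u hu) (B.symm (x - c))
    (by show c + B (B.symm (x - c)) ∈ K; simpa using hx) hlt
  have hnew : (A.comp M, c + A τ) ∈ X := by
    intro u hu
    have : c + B (τ + M u) ∈ K := hin u hu
    rw [hB, map_add, ← add_assoc] at this
    exact this
  have h1 := hmax hnew
  simp only [Set.mem_ofPred_eq] at h1
  have h2 : (A.comp M).det = A.det * LinearMap.det (M : V →ₗ[ℝ] V) :=
    LinearMap.det_comp (A : V →ₗ[ℝ] V) (M : V →ₗ[ℝ] V)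
  rw [h2, abs_mul] at h1
  nlinarith

end
end FT
end

namespace FT
section
open MeasureTheory Set FourierTransform RealInnerProductSpace
variable {d : ℕ}

lemma exists_surj (y : Fin d → ℤ) (hy : y ≠ 0) :
    ∃ (φ : (Fin d → ℤ) →ₗ[ℤ] ℤ) (g : ℤ), 1 ≤ g ∧ Function.Surjective φ ∧
      ∀ i, y i = g * φ (Pi.single i 1) := by
  have hne : (Finset.univ : Finset (Fin d)).Nonempty := by
    obtain ⟨i, -⟩ := Function.ne_iff.1 hy
    exact ⟨i, Finset.mem_univ i⟩
  obtain ⟨z, hz, hz1⟩ := Finset.extract_gcd y hne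
  set g := Finset.univ.gcd y with hg
  have hg0 : 0 ≤ g := by
    have h := Finset.normalize_gcd (s := Finset.univ) (f := y)
    exact Int.nonneg_of_normalize_eq_self h
  have hgne : g ≠ 0 := by
    intro h
    apply hy
    funext i
    rw [hz i (Finset.mem_univ i), h]; simp
  let φ : (Fin d → ℤ) →ₗ[ℤ] ℤ := ∑ i, z i • LinearMap.proj i
  have hφ : ∀ i, φ (Pi.single i 1) = z i := by
    intro i
    simp [φ, Pi.single_apply]
  refine ⟨φ, g, by omega, ?_, fun i => by rw [hφ]; exact hz i (Finset.mem_univ i)⟩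
  obtain ⟨m, hm⟩ := (IsPrincipalIdealRing.principal (LinearMap.range φ : Ideal ℤ)).principal
  have hdvd : ∀ i, m ∣ z i := by
    intro i
    have : z i ∈ (LinearMap.range φ : Ideal ℤ) := ⟨_, hφ i⟩
    rw [hm] at this
    exact Ideal.mem_span_singleton.1 this
  have h1 : m ∣ 1 := by
    rw [← hz1]
    exact Finset.dvd_gcd fun i _ => hdvd i
  rw [← LinearMap.range_eq_top]
  rw [hm]
  exact Ideal.span_singleton_eq_top.2 (isUnit_of_dvd_one h1)

/-- the adjoint equivalence -/
noncomputable def adjE (A : EuclideanSpace ℝ (Fin d) ≃L[ℝ] EuclideanSpace ℝ (Fin d)) :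
    EuclideanSpace ℝ (Fin d) ≃L[ℝ] EuclideanSpace ℝ (Fin d) :=
  ContinuousLinearEquiv.equivOfInverse
    (ContinuousLinearMap.adjoint (A : EuclideanSpace ℝ (Fin d) →L[ℝ] EuclideanSpace ℝ (Fin d)))
    (ContinuousLinearMap.adjoint (A.symm : EuclideanSpace ℝ (Fin d) →L[ℝ] EuclideanSpace ℝ (Fin d)))
    (fun x => by
      refine ext_inner_right ℝ fun v => ?_
      rw [ContinuousLinearMap.adjoint_inner_left, ContinuousLinearMap.adjoint_inner_left]
      simp)
    (fun x => by
      refine ext_inner_right ℝ fun v => ?_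
      rw [ContinuousLinearMap.adjoint_inner_left, ContinuousLinearMap.adjoint_inner_left]
      simp)

lemma adjE_inner (A : EuclideanSpace ℝ (Fin d) ≃L[ℝ] EuclideanSpace ℝ (Fin d))
    (t u : EuclideanSpace ℝ (Fin d)) : ⟪adjE A t, u⟫ = ⟪t, A u⟫ :=
  ContinuousLinearMap.adjoint_inner_left _ _ _

theorem width (hd : 2 ≤ d) (K : Set (EuclideanSpace ℝ (Fin d))) (hKc : IsCompact K)
    (hK : Convex ℝ K) (hi : (interior K).Nonempty)
    (hlat : ∀ x : Fin d → ℤ, lat x ∈ interior K → x = 0) :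
    ∃ (y : Fin d → ℤ) (m : ℝ), y ≠ 0 ∧ ∀ x ∈ K, |⟪lat y, x⟫ - m| ≤ d * (d + 1) / 2 := by
  obtain ⟨A, c, h1, h2⟩ := john d (by omega) (by simp) K hKc hK hi
  have hx : ∀ x : Fin d → ℤ, x ≠ 0 → 1 ≤ ‖A.symm (lat x - c)‖ := by
    intro x hx0
    by_contra hlt
    push Not at hlt
    apply hx0
    apply hlat
    rw [mem_interior]
    refine ⟨{z | ‖A.symm (z - c)‖ < 1}, ?_, isOpen_lt (by fun_prop) continuous_const, hlt⟩
    intro z hz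
    have := h1 (A.symm (z - c)) (le_of_lt hz)
    simpa using this
  have hy : ∃ y : Fin d → ℤ, y ≠ 0 ∧ ‖adjE A (lat y)‖ < (d + 1 : ℝ) / 2 := by
    by_contra hno
    push Not at hno
    exact spectral hd (adjE A) (fun x => A.symm x) (fun t x => by rw [adjE_inner]; simp) hno c hx
  obtain ⟨y, hy0, hy⟩ := hy
  refine ⟨y, ⟪lat y, c⟫, hy0, fun x hxK => ?_⟩
  rw [← inner_sub_right]
  have e : ⟪lat y, x - c⟫ = ⟪adjE A (lat y), A.symm (x - c)⟫ := by
    rw [adjE_inner]; simp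
  rw [e]
  refine (abs_real_inner_le_norm _ _).trans ?_
  have h3 := h2 x hxK
  calc _ ≤ ((d + 1 : ℝ) / 2) * d := mul_le_mul hy.le h3 (norm_nonneg _) (by positivity)
    _ = _ := by ring

end
end FT

theorem stmt15 {d : ℕ} (hd : 2 ≤ d) (ε : ℝ) (hε : 0 < ε)
    (U : Set (Fin d → ℝ)) (hUc : IsCompact U) (hUconv : Convex ℝ U)
    (hUint : (interior U).Nonempty)
    (hlat : Set.range (intCast (d := d)) ∩ interior (ε • U) = {0}) :
    ∃ φ : (Fin d → ℤ) →ₗ[ℤ] ℤ, Function.Surjective φ ∧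
      sSup (extR φ '' U) - sInf (extR φ '' U) ≤ (d * (d + 1) : ℝ) / ε := by
  let ι : EuclideanSpace ℝ (Fin d) ≃L[ℝ] (Fin d → ℝ) := EuclideanSpace.equiv (Fin d) ℝ
  have h_inter : interior (ι ⁻¹' (ε • U)) = ι ⁻¹' (interior (ε • U)) :=
    (ι.toHomeomorph.preimage_interior (ε • U)).symm
  obtain ⟨y, m, hy, hb⟩ := FT.width hd (ι ⁻¹' (ε • U))
    (ι.toHomeomorph.isCompact_preimage.2 (hUc.smul ε))
    ((hUconv.smul ε).linear_preimage (ι : EuclideanSpace ℝ (Fin d) →ₗ[ℝ] (Fin d → ℝ)))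
    (by
      rw [h_inter]
      obtain ⟨x, hx⟩ := hUint
      refine ⟨ι.symm (ε • x), ?_⟩
      rw [Set.mem_preimage, ι.apply_symm_apply, interior_smul₀ hε.ne']
      exact Set.smul_mem_smul_set hx)
    (by
      intro x hx
      rw [h_inter] at hx
      have : intCast x ∈ Set.range (intCast (d := d)) ∩ interior (ε • U) := ⟨⟨x, rfl⟩, hx⟩
      rw [hlat] at this
      funext i
      have h := congrFun this i
      simpa [intCast] using h)
  obtain ⟨φ, g, hg, hφ, hyφ⟩ := FT.exists_surj y hy
  refine ⟨φ, hφ, ?_⟩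
  have hg' : (1 : ℝ) ≤ g := by exact_mod_cast hg
  have key : ∀ x ∈ U, |extR φ x - m / (ε * g)| ≤ d * (d + 1) / 2 / ε := by
    intro x hx
    have h := hb (ι.symm (ε • x)) (by
      rw [Set.mem_preimage, ι.apply_symm_apply]; exact Set.smul_mem_smul_set hx)
    have e : inner ℝ (FT.lat y) (ι.symm (ε • x)) = ε * g * extR φ x := by
      have : ∀ i, (y i : ℝ) = g * (φ (Pi.single i 1) : ℝ) := fun i => by
        exact_mod_cast hyφ i
      simp only [PiLp.inner_apply, extR, Finset.mul_sum]
      refine Finset.sum_congr rfl fun i _ => ?_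
      have e1 : (FT.lat y) i = (y i : ℝ) := rfl
      have e2 : (ι.symm (ε • x)) i = ε * x i := rfl
      rw [e1, e2, this]
      simp
      ring
    rw [e] at h
    have e3 : extR φ x - m / (ε * g) = (ε * g * extR φ x - m) / (ε * g) := by
      field_simp
    rw [e3, abs_div, abs_of_pos (by positivity : 0 < ε * (g : ℝ))]
    have hεg : ε ≤ ε * g := by nlinarith
    exact div_le_div₀ (by positivity) h hε hεg
  have hne : (extR φ '' U).Nonempty := by
    obtain ⟨x, hx⟩ := hUint
    exact ⟨_, x, interior_subset hx, rfl⟩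
  have h1 : sSup (extR φ '' U) ≤ m / (ε * g) + d * (d + 1) / 2 / ε := by
    apply csSup_le hne
    rintro _ ⟨x, hx, rfl⟩
    linarith [(abs_le.1 (key x hx)).2]
  have h2 : m / (ε * g) - d * (d + 1) / 2 / ε ≤ sInf (extR φ '' U) := by
    apply le_csInf hne
    rintro _ ⟨x, hx, rfl⟩
    linarith [(abs_le.1 (key x hx)).1]
  have e : (d * (d + 1) : ℝ) / ε = d * (d + 1) / 2 / ε + d * (d + 1) / 2 / ε := by ring
  rw [e]
  linarith
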